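/- For every architecture A, finite alphabet Σ, and every CPDS S over (A,Σ), there exists an EMSO(A,Σ) sentence Φ_S such that L(Φ_S) = L(S). -/

import Mathlib

/-! ### Architectures and concurrent behaviors with matching (CBMs) -/

/-- The three kinds of data structures. -/
inductive DSKind : Type
  | stack
  | queue
  | bag
deriving DecidableEq

/-- An architecture: a finite set of processes, a finite set of data structures
(each a stack, queue, or bag), with writer and reader processes; stacks are
written and read by the same process. -/
structure Architecture where
  Procs : Type
  DS : Type
  procsFintype : Fintype Procs
  dsFintype : Fintype DS
  procsDecEq : DecidableEq Procs
  dsDecEq : DecidableEq DS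
  kind : DS → DSKind
  Writer : DS → Procs
  Reader : DS → Procs
  stack_wr : ∀ d, kind d = DSKind.stack → Writer d = Reader d

attribute [instance] Architecture.procsFintype Architecture.dsFintype
  Architecture.procsDecEq Architecture.dsDecEq

/-- Potential events: a process together with a (1-based) position. -/
abbrev Architecture.Event (A : Architecture) : Type := A.Procs × ℕ

/-- The data of a CBM: one word per process and one matching relation per
data structure (on potential events). -/
structure PreCBM (A : Architecture) (Alph : Type) where
  word : A.Procs → List Alph
  mrel : A.DS → A.Event → A.Event → Prop

namespace PreCBM

variable {A : Architecture} {Alph : Type}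

/-- `(p,i)` is an event iff `1 ≤ i ≤ |w_p|`. -/
def isEvent (M : PreCBM A Alph) (e : A.Event) : Prop :=
  1 ≤ e.2 ∧ e.2 ≤ (M.word e.1).length

/-- The set of events of `M`. -/
def events (M : PreCBM A Alph) : Set A.Event := {e | M.isEvent e}

/-- The label of event `(p,i)` is the `i`-th letter of `w_p`. -/
def label (M : PreCBM A Alph) (e : A.Event) : Option Alph :=
  (M.word e.1)[e.2 - 1]?

/-- Process-successor relation `(p,i) → (p,i+1)`. -/
def procSucc (M : PreCBM A Alph) (e f : A.Event) : Prop :=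
  M.isEvent e ∧ M.isEvent f ∧ f.1 = e.1 ∧ f.2 = e.2 + 1

/-- `e ▷ f` for some data structure. -/
def mat (M : PreCBM A Alph) (e f : A.Event) : Prop := ∃ d, M.mrel d e f

def step (M : PreCBM A Alph) (e f : A.Event) : Prop := M.procSucc e f ∨ M.mat e f

/-- The causal order `< = (→ ∪ ▷)⁺`. -/
def lt (M : PreCBM A Alph) : A.Event → A.Event → Prop := Relation.TransGen M.step

/-- An event is internal if it is not the endpoint of any matching edge. -/
def isInternal (M : PreCBM A Alph) (e : A.Event) : Prop :=
  ¬ ∃ d f, M.mrel d e f ∨ M.mrel d f e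

/-- The CBM axioms. -/
structure IsCBM (M : PreCBM A Alph) : Prop where
  mrel_valid : ∀ d e f, M.mrel d e f →
    M.isEvent e ∧ M.isEvent f ∧ e.1 = A.Writer d ∧ f.1 = A.Reader d
  disjoint : ∀ d d' e f e' f', M.mrel d e f → M.mrel d' e' f' →
    ¬ (d = d' ∧ e = e' ∧ f = f') → e ≠ e' ∧ e ≠ f' ∧ f ≠ e' ∧ f ≠ f'
  irrefl : ∀ e, ¬ M.lt e e
  lifo : ∀ d, A.kind d = DSKind.stack → ∀ e₁ f₁ e₂ f₂,
    M.mrel d e₁ f₁ → M.mrel d e₂ f₂ → M.lt e₁ e₂ → M.lt e₂ f₁ → M.lt f₂ f₁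
  fifo : ∀ d, A.kind d = DSKind.queue → ∀ e₁ f₁ e₂ f₂,
    M.mrel d e₁ f₁ → M.mrel d e₂ f₂ → M.lt e₁ e₂ → M.lt f₁ f₂

end PreCBM

/-- Concurrent behaviors with matching over `(A, Alph)`. -/
def CBM (A : Architecture) (Alph : Type) : Type := {M : PreCBM A Alph // M.IsCBM}
/-! ### Systems of concurrent processes with data structures (CPDS) -/

/-- A CPDS over an architecture `A` and alphabet `Alph`. -/
structure CPDS (A : Architecture) (Alph : Type) where
  Locs : Type
  Val : Type
  locsFintype : Fintype Locs
  valFintype : Fintype Val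
  locsNonempty : Nonempty Locs
  valNonempty : Nonempty Val
  internal : A.Procs → Locs → Alph → Locs → Prop
  write : A.Procs → Locs → Alph → A.DS → Val → Locs → Prop
  read : A.Procs → Locs → Alph → A.DS → Val → Locs → Prop
  write_writer : ∀ p ℓ a d v ℓ', write p ℓ a d v ℓ' → A.Writer d = p
  read_reader : ∀ p ℓ a d v ℓ', read p ℓ a d v ℓ' → A.Reader d = p
  init : Locs
  finals : Set (A.Procs → Locs)

namespace CPDS

variable {A : Architecture} {Alph : Type}

/-- `ρ⁻(e)`: location before event `e` (`init` if `e` is minimal on its process). -/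
def prevLoc (S : CPDS A Alph) (ρ : A.Event → S.Locs) (e : A.Event) : S.Locs :=
  if e.2 ≤ 1 then S.init else ρ (e.1, e.2 - 1)

/-- `ρ` is a run of `S` on `M` (graph semantics). -/
def IsRun (S : CPDS A Alph) (M : PreCBM A Alph) (ρ : A.Event → S.Locs) : Prop :=
  (∀ e, M.isEvent e → M.isInternal e →
    ∃ a, M.label e = some a ∧ S.internal e.1 (S.prevLoc ρ e) a (ρ e)) ∧
  (∀ d e f, M.mrel d e f → ∃ v a b,
    M.label e = some a ∧ M.label f = some b ∧
    S.write e.1 (S.prevLoc ρ e) a d v (ρ e) ∧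
    S.read f.1 (S.prevLoc ρ f) b d v (ρ f))

/-- Location of the last event of process `p` (`init` if it has no event). -/
def lastLoc (S : CPDS A Alph) (M : PreCBM A Alph) (ρ : A.Event → S.Locs)
    (p : A.Procs) : S.Locs :=
  if (M.word p).length = 0 then S.init else ρ (p, (M.word p).length)

/-- `S` accepts `M`: some run reaching a global final location tuple. -/
def AcceptsPre (S : CPDS A Alph) (M : PreCBM A Alph) : Prop :=
  ∃ ρ : A.Event → S.Locs, S.IsRun M ρ ∧ (fun p => S.lastLoc M ρ p) ∈ S.finals

/-- The graph-semantics language `L(S) ⊆ CBM(A,Alph)`. -/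
def lang (S : CPDS A Alph) : Set (CBM A Alph) := {M | S.AcceptsPre M.1}

end CPDS
/-! ### Monadic second-order logic over vertex- and edge-labeled structures -/

/-- MSO formulas over structures with vertex labels `Vl` and binary relations
indexed by `El`.  First-order variables and set variables are indexed by `ℕ`. -/
inductive GMSO (Vl El : Type) : Type
  | lab (a : Vl) (x : ℕ)
  | edge (γ : El) (x y : ℕ)
  | eq (x y : ℕ)
  | mem (x X : ℕ)
  | or (φ ψ : GMSO Vl El)
  | not (φ : GMSO Vl El)
  | exFO (x : ℕ) (φ : GMSO Vl El)
  | exSO (X : ℕ) (φ : GMSO Vl El)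

namespace GMSO

variable {Vl El : Type} {V : Type}

/-- Satisfaction of an MSO formula in a structure with domain `dom`, labeling
relation `lab` and edge relations `edge`, under valuations `ν` (first-order,
partial) and `μ` (second-order). -/
def Sat (dom : Set V) (lab : V → Vl → Prop) (edge : El → V → V → Prop) :
    (ℕ → Option V) → (ℕ → Set V) → GMSO Vl El → Prop
  | ν, _, .lab a x => ∃ v, ν x = some v ∧ v ∈ dom ∧ lab v a
  | ν, _, .edge γ x y => ∃ u v, ν x = some u ∧ ν y = some v ∧ edge γ u v
  | ν, _, .eq x y => ∃ v, ν x = some v ∧ ν y = some v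
  | ν, μ, .mem x X => ∃ v, ν x = some v ∧ v ∈ μ X
  | ν, μ, .or φ ψ => Sat dom lab edge ν μ φ ∨ Sat dom lab edge ν μ ψ
  | ν, μ, .not φ => ¬ Sat dom lab edge ν μ φ
  | ν, μ, .exFO x φ => ∃ v ∈ dom, Sat dom lab edge (Function.update ν x (some v)) μ φ
  | ν, μ, .exSO X φ => ∃ E : Set V, E ⊆ dom ∧ Sat dom lab edge ν (Function.update μ X E) φ

/-- Free first-order variables. -/
def freeFO : GMSO Vl El → Set ℕ
  | .lab _ x => {x}
  | .edge _ x y => {x, y}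
  | .eq x y => {x, y}
  | .mem x _ => {x}
  | .or φ ψ => freeFO φ ∪ freeFO ψ
  | .not φ => freeFO φ
  | .exFO x φ => freeFO φ \ {x}
  | .exSO _ φ => freeFO φ

/-- Free second-order variables. -/
def freeSO : GMSO Vl El → Set ℕ
  | .lab _ _ => ∅
  | .edge _ _ _ => ∅
  | .eq _ _ => ∅
  | .mem _ X => {X}
  | .or φ ψ => freeSO φ ∪ freeSO ψ
  | .not φ => freeSO φ
  | .exFO _ φ => freeSO φ
  | .exSO X φ => freeSO φ \ {X}

/-- A sentence is a formula without free variables. -/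
def Closed (φ : GMSO Vl El) : Prop := freeFO φ = ∅ ∧ freeSO φ = ∅

/-- Satisfaction of a sentence (valuations are irrelevant for sentences). -/
def Models (dom : Set V) (lab : V → Vl → Prop) (edge : El → V → V → Prop)
    (φ : GMSO Vl El) : Prop :=
  Sat dom lab edge (fun _ => none) (fun _ => ∅) φ

/-- First-order formulas: no second-order quantification. -/
def FirstOrder : GMSO Vl El → Prop
  | .or φ ψ => FirstOrder φ ∧ FirstOrder ψ
  | .not φ => FirstOrder φ
  | .exFO _ φ => FirstOrder φ
  | .exSO _ _ => False
  | _ => True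

/-- EMSO formulas: a block of existential second-order quantifiers followed by a
first-order formula. -/
inductive IsEMSO : GMSO Vl El → Prop
  | fo {φ : GMSO Vl El} : FirstOrder φ → IsEMSO φ
  | ex {X : ℕ} {φ : GMSO Vl El} : IsEMSO φ → IsEMSO (.exSO X φ)

end GMSO
/-! ### MSO over CBMs -/

namespace PreCBM

variable {A : Architecture} {Alph : Type}

/-- Vertex-label relation of a CBM: `a(x)` (letter) and `p(x)` (process). -/
def gmsoLab (M : PreCBM A Alph) (e : A.Event) : Alph ⊕ A.Procs → Prop := fun q =>
  match q with
  | Sum.inl a => M.label e = some a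
  | Sum.inr p => e.1 = p

/-- Edge relations of a CBM: `x → y` (`none`) and `x ▷^d y` (`some d`). -/
def gmsoEdge (M : PreCBM A Alph) : Option A.DS → A.Event → A.Event → Prop := fun γ e f =>
  match γ with
  | none => M.procSucc e f
  | some d => M.mrel d e f

/-- Satisfaction of an `MSO(A,Alph)` sentence in the CBM `M`. -/
def MsoSat (M : PreCBM A Alph) (φ : GMSO (Alph ⊕ A.Procs) (Option A.DS)) : Prop :=
  GMSO.Models M.events M.gmsoLab M.gmsoEdge φ

end PreCBM

/-- `L(φ) = {M ∈ CBM(A,Alph) | M ⊨ φ}`. -/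
def msoLang (A : Architecture) (Alph : Type)
    (φ : GMSO (Alph ⊕ A.Procs) (Option A.DS)) : Set (CBM A Alph) :=
  {M | M.1.MsoSat φ}


namespace GMSO
open Classical

section
variable {Vl El : Type} {V : Type}

def fand (φ ψ : GMSO Vl El) : GMSO Vl El := .not (.or (.not φ) (.not ψ))
def ffalse : GMSO Vl El := .exFO 0 (.not (.eq 0 0))
noncomputable def guard (p : Prop) : GMSO Vl El := if p then .not ffalse else ffalse
def lOr : List (GMSO Vl El) → GMSO Vl El
  | [] => ffalse
  | φ :: l => .or φ (lOr l)
noncomputable def bOr {ι : Type} [Fintype ι] (f : ι → GMSO Vl El) : GMSO Vl El :=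
  lOr (Finset.univ.toList.map f)
noncomputable def bAnd {ι : Type} [Fintype ι] (f : ι → GMSO Vl El) : GMSO Vl El :=
  .not (bOr fun i => .not (f i))
def exBlock : ℕ → GMSO Vl El → GMSO Vl El
  | 0, φ => φ
  | n+1, φ => .exSO n (exBlock n φ)

/-- first-order with bounded free variables -/
def Good (F G : Set ℕ) (φ : GMSO Vl El) : Prop :=
  FirstOrder φ ∧ freeFO φ ⊆ F ∧ freeSO φ ⊆ G

variable {F G : Set ℕ}

theorem good_lab {a : Vl} {x : ℕ} (h : x ∈ F) : Good F G (.lab a x : GMSO Vl El) := by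
  simp [Good, FirstOrder, freeFO, freeSO, h]
theorem good_edge {a : El} {x y : ℕ} (h : x ∈ F) (h' : y ∈ F) :
    Good F G (.edge a x y : GMSO Vl El) := by
  simp [Good, FirstOrder, freeFO, freeSO, h, h', Set.insert_subset_iff]
theorem good_mem {x X : ℕ} (h : x ∈ F) (h' : X ∈ G) : Good F G (.mem x X : GMSO Vl El) := by
  simp [Good, FirstOrder, freeFO, freeSO, h, h']
theorem good_or {φ ψ : GMSO Vl El} (h : Good F G φ) (h' : Good F G ψ) : Good F G (.or φ ψ) :=
  ⟨⟨h.1, h'.1⟩, Set.union_subset h.2.1 h'.2.1, Set.union_subset h.2.2 h'.2.2⟩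
theorem good_not {φ : GMSO Vl El} (h : Good F G φ) : Good F G (.not φ) := h
theorem good_and {φ ψ : GMSO Vl El} (h : Good F G φ) (h' : Good F G ψ) : Good F G (fand φ ψ) :=
  good_or (φ := .not φ) (ψ := .not ψ) h h'
theorem good_ex {φ : GMSO Vl El} {x : ℕ} (h : Good (insert x F) G φ) :
    Good F G (.exFO x φ) := by
  refine ⟨h.1, ?_, h.2.2⟩
  intro y hy
  rcases h.2.1 hy.1 with h1 | h1
  · exact absurd h1 hy.2
  · exact h1
theorem good_false : Good F G (ffalse : GMSO Vl El) := by
  simp [Good, ffalse, FirstOrder, freeFO, freeSO]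
theorem good_guard {p : Prop} : Good F G (guard p : GMSO Vl El) := by
  unfold guard; split
  · exact good_not good_false
  · exact good_false
theorem good_lOr (l : List (GMSO Vl El)) (h : ∀ φ ∈ l, Good F G φ) : Good F G (lOr l) := by
  induction l with
  | nil => exact good_false
  | cons a l ih =>
    exact good_or (h a (by simp)) (ih fun φ hφ => h φ (by simp [hφ]))
theorem good_bOr {ι : Type} [Fintype ι] {f : ι → GMSO Vl El} (h : ∀ i, Good F G (f i)) :
    Good F G (bOr f) := by
  apply good_lOr
  intro φ hφ
  simp only [List.mem_map] at hφ
  obtain ⟨i, -, rfl⟩ := hφ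
  exact h i
theorem good_bAnd {ι : Type} [Fintype ι] {f : ι → GMSO Vl El} (h : ∀ i, Good F G (f i)) :
    Good F G (bAnd f) := good_not (good_bOr fun i => good_not (h i))

theorem exBlock_emso (n : ℕ) {φ : GMSO Vl El} (h : FirstOrder φ) : IsEMSO (exBlock n φ) := by
  induction n with
  | zero => exact .fo h
  | succ n ih => exact .ex ih
theorem exBlock_freeFO (n : ℕ) (φ : GMSO Vl El) : freeFO (exBlock n φ) = freeFO φ := by
  induction n with
  | zero => rfl
  | succ n ih => exact ih
theorem exBlock_freeSO (n : ℕ) (φ : GMSO Vl El) :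
    freeSO (exBlock n φ) = freeSO φ \ {i | i < n} := by
  induction n with
  | zero => simp [exBlock]
  | succ n ih =>
    simp only [exBlock, freeSO, ih]
    ext i
    simp only [Set.mem_diff, Set.mem_setOf_eq, Set.mem_singleton_iff, and_assoc]
    refine and_congr_right fun _ => ?_
    omega

variable {dom : Set V} {lab : V → Vl → Prop} {edge : El → V → V → Prop}
  {ν : ℕ → Option V} {μ : ℕ → Set V}

@[simp] theorem sat_fand {φ ψ : GMSO Vl El} : Sat dom lab edge ν μ (fand φ ψ) ↔
    Sat dom lab edge ν μ φ ∧ Sat dom lab edge ν μ ψ := by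
  simp [fand, Sat]
@[simp] theorem sat_ffalse : ¬ Sat dom lab edge ν μ (ffalse : GMSO Vl El) := by
  simp [ffalse, Sat]
@[simp] theorem sat_guard {p : Prop} : Sat dom lab edge ν μ (guard p : GMSO Vl El) ↔ p := by
  unfold guard; split <;> simp [*, Sat]
theorem sat_lOr (l : List (GMSO Vl El)) : Sat dom lab edge ν μ (lOr l) ↔
    ∃ φ ∈ l, Sat dom lab edge ν μ φ := by
  induction l with
  | nil => simp [lOr]
  | cons a l ih => simp [lOr, Sat, ih]
@[simp] theorem sat_bOr {ι : Type} [Fintype ι] {f : ι → GMSO Vl El} :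
    Sat dom lab edge ν μ (bOr f) ↔ ∃ i, Sat dom lab edge ν μ (f i) := by
  simp [bOr, sat_lOr]
@[simp] theorem sat_bAnd {ι : Type} [Fintype ι] {f : ι → GMSO Vl El} :
    Sat dom lab edge ν μ (bAnd f) ↔ ∀ i, Sat dom lab edge ν μ (f i) := by
  simp [bAnd, Sat]
theorem sat_exBlock (n : ℕ) (φ : GMSO Vl El) : ∀ μ : ℕ → Set V,
    (Sat dom lab edge ν μ (exBlock n φ) ↔
    ∃ μ' : ℕ → Set V, (∀ i < n, μ' i ⊆ dom) ∧ (∀ i, n ≤ i → μ' i = μ i) ∧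
      Sat dom lab edge ν μ' φ) := by
  induction n with
  | zero =>
    intro μ
    constructor
    · intro h; exact ⟨μ, by simp, by simp, h⟩
    · rintro ⟨μ', -, h, h'⟩
      have : μ' = μ := funext fun i => h i (Nat.zero_le _)
      exact this ▸ h'
  | succ n ih =>
    intro μ
    simp only [exBlock, Sat, ih]
    constructor
    · rintro ⟨E, hE, μ', h1, h2, h3⟩
      refine ⟨μ', ?_, ?_, h3⟩
      · intro i hi
        rcases Nat.lt_succ_iff_lt_or_eq.1 hi with h | rfl
        · exact h1 i h
        · rw [h2 i le_rfl]; simpa using hE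
      · intro i hi
        rw [h2 i (by omega), Function.update_of_ne (by omega)]
    · rintro ⟨μ', h1, h2, h3⟩
      refine ⟨μ' n, h1 n (by omega), μ', fun i hi => h1 i (by omega), ?_, h3⟩
      intro i hi
      by_cases h : i = n
      · subst h; simp
      · rw [Function.update_of_ne h, h2 i (by omega)]
end
end GMSO

namespace CPDS
open Classical GMSO

variable {A : Architecture} {Alph : Type}

noncomputable def dec (S : CPDS A Alph) (T : Set S.Locs) : S.Locs :=
  if h : ∃ l, T = {l} then h.choose else S.init

theorem dec_single (S : CPDS A Alph) (l : S.Locs) : S.dec {l} = l := by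
  have h : ∃ l', ({l} : Set S.Locs) = {l'} := ⟨l, rfl⟩
  rw [dec, dif_pos h]
  exact (Set.singleton_injective h.choose_spec).symm

attribute [local instance] CPDS.locsFintype CPDS.valFintype

noncomputable def idx (S : CPDS A Alph) (l : S.Locs) : ℕ := Fintype.equivFin S.Locs l

theorem idx_lt (S : CPDS A Alph) (l : S.Locs) : S.idx l < Fintype.card S.Locs :=
  (Fintype.equivFin S.Locs l).2

theorem idx_inj (S : CPDS A Alph) {l l' : S.Locs} (h : S.idx l = S.idx l') : l = l' :=
  (Fintype.equivFin S.Locs).injective (Fin.ext h)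

noncomputable def rho (S : CPDS A Alph) (μ : ℕ → Set A.Event) (e : A.Event) : S.Locs :=
  S.dec {l | e ∈ μ (S.idx l)}

abbrev Fm (A : Architecture) (Alph : Type) := GMSO (Alph ⊕ A.Procs) (Option A.DS)

noncomputable def fLoc (S : CPDS A Alph) (l : S.Locs) (x : ℕ) : Fm A Alph :=
  bOr fun T : Set S.Locs => fand (guard (S.dec T = l))
    (bAnd fun l' => if l' ∈ T then .mem x (S.idx l') else .not (.mem x (S.idx l')))

noncomputable def fPrev (S : CPDS A Alph) (l : S.Locs) (x : ℕ) : Fm A Alph :=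
  .or (.exFO 2 (fand (.edge none 2 x) (S.fLoc l 2)))
    (fand (guard (S.init = l)) (.not (.exFO 2 (.edge none 2 x))))

noncomputable def fTr [Fintype Alph] (S : CPDS A Alph)
    (R : A.Procs → S.Locs → Alph → S.Locs → Prop) (x : ℕ) : Fm A Alph :=
  bOr fun p => bOr fun l => bOr fun a => bOr fun l' =>
    fand (guard (R p l a l')) (fand (.lab (.inr p) x) (fand (S.fPrev l x)
      (fand (.lab (.inl a) x) (S.fLoc l' x))))

noncomputable def fLast (S : CPDS A Alph) (p : A.Procs) (l : S.Locs) : Fm A Alph :=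
  .or (.exFO 0 (fand (.lab (.inr p) 0) (fand (.not (.exFO 1 (.edge none 0 1))) (S.fLoc l 0))))
    (fand (guard (S.init = l)) (.not (.exFO 0 (.lab (.inr p) 0))))

noncomputable def fInt [Fintype Alph] (S : CPDS A Alph) : Fm A Alph :=
  .not (.exFO 0 (fand
    (.not (bOr fun d : A.DS => .exFO 1 (.or (.edge (some d) 0 1) (.edge (some d) 1 0))))
    (.not (S.fTr S.internal 0))))

noncomputable def fMat [Fintype Alph] (S : CPDS A Alph) : Fm A Alph :=
  .not (bOr fun d : A.DS => .exFO 0 (.exFO 1 (fand (.edge (some d) 0 1)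
    (.not (bOr fun v : S.Val => fand (S.fTr (fun p l a l' => S.write p l a d v l') 0)
      (S.fTr (fun p l a l' => S.read p l a d v l') 1))))))

noncomputable def fFin (S : CPDS A Alph) : Fm A Alph :=
  bOr fun t : A.Procs → S.Locs => fand (guard (t ∈ S.finals)) (bAnd fun p => S.fLast p (t p))

noncomputable def fBody [Fintype Alph] (S : CPDS A Alph) : Fm A Alph :=
  fand S.fInt (fand S.fMat S.fFin)

abbrev GS (S : CPDS A Alph) : Set ℕ := {i | i < Fintype.card S.Locs}

theorem good_fLoc (S : CPDS A Alph) {F : Set ℕ} (l : S.Locs) {x : ℕ} (h : x ∈ F) :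
    Good F S.GS (S.fLoc l x) := by
  refine good_bOr fun T => good_and good_guard (good_bAnd fun l' => ?_)
  split
  · exact good_mem h (S.idx_lt l')
  · exact good_not (good_mem h (S.idx_lt l'))

theorem good_fPrev (S : CPDS A Alph) {F : Set ℕ} (l : S.Locs) {x : ℕ} (h : x ∈ F) :
    Good F S.GS (S.fPrev l x) :=
  good_or (good_ex (good_and (good_edge (by simp) (by simp [h])) (S.good_fLoc l (by simp))))
    (good_and good_guard (good_not (good_ex (good_edge (by simp) (by simp [h])))))

theorem good_fTr [Fintype Alph] (S : CPDS A Alph) {F : Set ℕ}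
    (R : A.Procs → S.Locs → Alph → S.Locs → Prop) {x : ℕ} (h : x ∈ F) :
    Good F S.GS (S.fTr R x) :=
  good_bOr fun _ => good_bOr fun _ => good_bOr fun _ => good_bOr fun _ =>
    good_and good_guard (good_and (good_lab h) (good_and (S.good_fPrev _ h)
      (good_and (good_lab h) (S.good_fLoc _ h))))

theorem good_fBody [Fintype Alph] (S : CPDS A Alph) : Good ∅ S.GS S.fBody := by
  refine good_and ?_ (good_and ?_ ?_)
  · exact good_not (good_ex (good_and (good_not (good_bOr fun d => good_ex
      (good_or (good_edge (by simp) (by simp)) (good_edge (by simp) (by simp)))))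
      (good_not (S.good_fTr _ (by simp)))))
  · exact good_not (good_bOr fun d => good_ex (good_ex (good_and
      (good_edge (by simp) (by simp)) (good_not (good_bOr fun v => good_and
        (S.good_fTr _ (by simp)) (S.good_fTr _ (by simp)))))))
  · exact good_bOr fun t => good_and good_guard (good_bAnd fun p =>
      good_or (good_ex (good_and (good_lab (by simp)) (good_and (good_not (good_ex
        (good_edge (by simp) (by simp)))) (S.good_fLoc _ (by simp)))))
        (good_and good_guard (good_not (good_ex (good_lab (by simp))))))

section sat
variable (S : CPDS A Alph) (M : PreCBM A Alph) {ν : ℕ → Option A.Event} {μ : ℕ → Set A.Event}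

theorem sat_fLoc {l : S.Locs} {x : ℕ} {e : A.Event} (h : ν x = some e) :
    Sat M.events M.gmsoLab M.gmsoEdge ν μ (S.fLoc l x) ↔ S.rho μ e = l := by
  simp only [fLoc, sat_bOr, sat_fand, sat_guard, sat_bAnd]
  have key : ∀ T : Set S.Locs, (∀ l', Sat M.events M.gmsoLab M.gmsoEdge ν μ
      (if l' ∈ T then .mem x (S.idx l') else .not (.mem x (S.idx l')))) ↔
      T = {l | e ∈ μ (S.idx l)} := by
    intro T
    rw [Set.ext_iff]
    refine forall_congr' fun l' => ?_
    by_cases hT : l' ∈ T <;> simp [hT, Sat, h]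
  simp only [key]
  constructor
  · rintro ⟨T, h1, rfl⟩; exact h1
  · intro h1; exact ⟨_, h1, rfl⟩

theorem sat_fPrev {l : S.Locs} {x : ℕ} {e : A.Event} (hx : x ≠ 2) (h : ν x = some e)
    (he : M.isEvent e) :
    Sat M.events M.gmsoLab M.gmsoEdge ν μ (S.fPrev l x) ↔ S.prevLoc (S.rho μ) e = l := by
  have hl : ∀ v : A.Event, Sat M.events M.gmsoLab M.gmsoEdge (Function.update ν 2 (some v)) μ
      (S.fLoc l 2) ↔ S.rho μ v = l := fun v => sat_fLoc S M (by simp)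
  simp only [fPrev, Sat, sat_fand, sat_guard, hl, Function.update_self,
    Function.update_of_ne hx, h, Option.some.injEq, exists_and_left, exists_eq_left',
    PreCBM.gmsoEdge, prevLoc]
  obtain ⟨p, i⟩ := e
  obtain ⟨he1, he2⟩ := he
  simp only at he1 he2
  by_cases hi : i ≤ 1
  · have : ∀ v, ¬ M.procSucc v (p, i) := by
      rintro v ⟨⟨h1, -⟩, -, -, h2⟩
      simp only at h2
      omega
    simp [this, hi]
  · have hs : ∀ v, M.procSucc v (p, i) ↔ v = (p, i-1) := by
      rintro ⟨q, j⟩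
      constructor
      · rintro ⟨-, -, h1, h2⟩
        simp only at h1 h2
        subst h1 h2; simp
      · rintro h1
        obtain ⟨rfl, rfl⟩ := Prod.mk.inj h1
        refine ⟨⟨?_, ?_⟩, ⟨he1, he2⟩, rfl, ?_⟩ <;> simp only <;> omega
    have hm : (p, i-1) ∈ M.events := ⟨by simp only; omega, by simp only; omega⟩
    simp [hs, hi, hm]

theorem sat_fTr [Fintype Alph] {R : A.Procs → S.Locs → Alph → S.Locs → Prop}
    {x : ℕ} {e : A.Event} (hx : x ≠ 2) (h : ν x = some e) (he : M.isEvent e) :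
    Sat M.events M.gmsoLab M.gmsoEdge ν μ (S.fTr R x) ↔
      ∃ a, M.label e = some a ∧ R e.1 (S.prevLoc (S.rho μ) e) a (S.rho μ e) := by
  have he' : e ∈ M.events := he
  simp only [fTr, sat_bOr, sat_fand, sat_guard, sat_fLoc S M h, sat_fPrev S M hx h he, Sat, h,
    Option.some.injEq, exists_eq_left', he', true_and, PreCBM.gmsoLab]
  constructor
  · rintro ⟨p, l, a, l', h1, rfl, rfl, h2, rfl⟩; exact ⟨a, h2, h1⟩
  · rintro ⟨a, h2, h1⟩; exact ⟨_, _, a, _, h1, rfl, rfl, h2, rfl⟩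

theorem sat_fLast {p : A.Procs} {l : S.Locs} :
    Sat M.events M.gmsoLab M.gmsoEdge ν μ (S.fLast p l) ↔ S.lastLoc M (S.rho μ) p = l := by
  have hl : ∀ v : A.Event, Sat M.events M.gmsoLab M.gmsoEdge (Function.update ν 0 (some v)) μ
      (S.fLoc l 0) ↔ S.rho μ v = l := fun v => sat_fLoc S M (by simp)
  simp only [fLast, Sat, sat_fand, sat_guard, hl, Function.update_self,
    Function.update_of_ne (show (0:ℕ) ≠ 1 by decide), Option.some.injEq, exists_and_left,
    exists_eq_left', PreCBM.gmsoEdge, PreCBM.gmsoLab, lastLoc]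
  by_cases hp : (M.word p).length = 0
  · have : ∀ v ∈ M.events, v.1 ≠ p := by
      rintro ⟨q, j⟩ ⟨h1, h2⟩ h3
      simp only at h1 h2 h3
      subst h3; omega
    rw [if_pos hp]
    constructor
    · rintro (⟨v, hv, ⟨-, h⟩, -⟩ | h)
      · exact absurd h (this v hv)
      · exact h.1
    · intro h
      refine Or.inr ⟨h, ?_⟩
      rintro ⟨v, hv, -, h⟩
      exact this v hv h
  · rw [if_neg hp]
    have hm : (p, (M.word p).length) ∈ M.events :=
      ⟨by simp only; omega, le_rfl⟩
    constructor
    · rintro (⟨v, hv, ⟨-, h⟩, h2, h3⟩ | h)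
      · obtain ⟨q, j⟩ := v
        simp only at h
        subst h
        have : j = (M.word q).length := by
          by_contra hj
          have hv0 := hv
          obtain ⟨a, b⟩ := hv0
          simp only at a b
          have hm' : M.isEvent (q, j+1) := ⟨by simp only; omega, by simp only; omega⟩
          exact h2 ⟨(q, j+1), hm', hv, hm', rfl, rfl⟩
        rw [← this]; exact h3
      · exact absurd ⟨_, hm, hm, rfl⟩ h.2
    · intro h
      refine Or.inl ⟨_, hm, ⟨hm, rfl⟩, ?_, h⟩
      rintro ⟨v, -, -, ⟨-, h1⟩, h2, h3⟩
      simp only at h2 h3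
      rw [h2] at h1
      omega

theorem sat_fBody [Fintype Alph] (hM : M.IsCBM) :
    Sat M.events M.gmsoLab M.gmsoEdge ν μ S.fBody ↔
      S.IsRun M (S.rho μ) ∧ (fun p => S.lastLoc M (S.rho μ) p) ∈ S.finals := by
  have hI : Sat M.events M.gmsoLab M.gmsoEdge ν μ S.fInt ↔
      (∀ e, M.isEvent e → M.isInternal e →
      ∃ a, M.label e = some a ∧ S.internal e.1 (S.prevLoc (S.rho μ) e) a (S.rho μ e)) := by
    simp only [fInt, Sat, sat_fand, sat_bOr, not_exists, not_and, not_not]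
    refine forall_congr' fun e => forall_congr' fun he => ?_
    rw [sat_fTr S M (e := e) (by decide) (by simp) he]
    refine imp_congr ?_ Iff.rfl
    simp only [PreCBM.isInternal, not_exists, Function.update_self,
      Function.update_of_ne (show (0:ℕ) ≠ 1 by decide), Option.some.injEq, PreCBM.gmsoEdge]
    refine forall_congr' fun d => ?_
    constructor
    · rintro h f hf
      have hf' : f ∈ M.events := by
        rcases hf with hf | hf
        · exact (hM.mrel_valid _ _ _ hf).2.1
        · exact (hM.mrel_valid _ _ _ hf).1
      refine h f hf' ?_
      rcases hf with hf | hf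
      · exact .inl ⟨e, f, rfl, rfl, hf⟩
      · exact .inr ⟨f, e, rfl, rfl, hf⟩
    · rintro h f - (⟨u, v, rfl, rfl, hf⟩ | ⟨u, v, rfl, rfl, hf⟩)
      · exact h _ (.inl hf)
      · exact h _ (.inr hf)
  have hT : Sat M.events M.gmsoLab M.gmsoEdge ν μ S.fMat ↔
      (∀ d e f, M.mrel d e f → ∃ v a b,
    M.label e = some a ∧ M.label f = some b ∧
    S.write e.1 (S.prevLoc (S.rho μ) e) a d v (S.rho μ e) ∧
    S.read f.1 (S.prevLoc (S.rho μ) f) b d v (S.rho μ f)) := by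
    simp only [fMat, Sat, sat_fand, sat_bOr, not_exists, not_and, not_not]
    refine forall_congr' fun d => forall_congr' fun e => ?_
    have key : ∀ f, M.isEvent e → M.isEvent f → ∀ v,
        ((Sat M.events M.gmsoLab M.gmsoEdge
          (Function.update (Function.update ν 0 (some e)) 1 (some f)) μ
          (S.fTr (fun p l a l' => S.write p l a d v l') 0) ∧
        Sat M.events M.gmsoLab M.gmsoEdge
          (Function.update (Function.update ν 0 (some e)) 1 (some f)) μ
          (S.fTr (fun p l a l' => S.read p l a d v l') 1)) ↔ ∃ a b,
        M.label e = some a ∧ M.label f = some b ∧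
        S.write e.1 (S.prevLoc (S.rho μ) e) a d v (S.rho μ e) ∧
        S.read f.1 (S.prevLoc (S.rho μ) f) b d v (S.rho μ f)) := by
      intro f he hf v
      rw [sat_fTr S M (e := e) (by decide) (by simp) he,
        sat_fTr S M (e := f) (by decide) (by simp) hf]
      constructor
      · rintro ⟨⟨a, h1, h2⟩, b, h3, h4⟩; exact ⟨a, b, h1, h3, h2, h4⟩
      · rintro ⟨a, b, h1, h3, h2, h4⟩; exact ⟨⟨a, h1, h2⟩, b, h3, h4⟩
    constructor
    · intro h f hf
      obtain ⟨he', hf', -⟩ := hM.mrel_valid _ _ _ hf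
      by_contra hc
      refine h he' f hf' ⟨e, f, by simp, by simp, hf⟩ fun v h1 h2 => ?_
      exact hc ⟨v, (key f he' hf' v).1 ⟨h1, h2⟩⟩
    · rintro h he f hf ⟨u, v, hu, hv, huv⟩ hc
      simp at hu hv
      subst hu hv
      obtain ⟨v, hv⟩ := h _ huv
      have := (key _ he hf v).2 hv
      exact hc v this.1 this.2
  have hF : Sat M.events M.gmsoLab M.gmsoEdge ν μ S.fFin ↔
      (fun p => S.lastLoc M (S.rho μ) p) ∈ S.finals := by
    simp only [fFin, sat_bOr, sat_fand, sat_guard, sat_bAnd, sat_fLast]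
    constructor
    · rintro ⟨t, h1, h2⟩
      rwa [show (fun p => S.lastLoc M (S.rho μ) p) = t from funext h2]
    · intro h; exact ⟨_, h, fun _ => rfl⟩
  rw [fBody, sat_fand, sat_fand, hI, hT, hF, IsRun, and_assoc]

theorem prevLoc_congr {ρ ρ' : A.Event → S.Locs} (h : ∀ e, M.isEvent e → ρ e = ρ' e)
    {e : A.Event} (he : M.isEvent e) : S.prevLoc ρ e = S.prevLoc ρ' e := by
  unfold prevLoc
  split
  · rfl
  · obtain ⟨h1, h2⟩ := he
    exact h _ ⟨by simp only; omega, by simp only; omega⟩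

theorem run_congr (hM : M.IsCBM) {ρ ρ' : A.Event → S.Locs} (h : ∀ e, M.isEvent e → ρ e = ρ' e)
    (hr : S.IsRun M ρ ∧ (fun p => S.lastLoc M ρ p) ∈ S.finals) :
    S.IsRun M ρ' ∧ (fun p => S.lastLoc M ρ' p) ∈ S.finals := by
  obtain ⟨⟨h1, h2⟩, h3⟩ := hr
  refine ⟨⟨?_, ?_⟩, ?_⟩
  · intro e he hi
    rw [← prevLoc_congr S M h he, ← h e he]
    exact h1 e he hi
  · intro d e f hef
    obtain ⟨he, hf, -⟩ := hM.mrel_valid _ _ _ hef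
    rw [← prevLoc_congr S M h he, ← h e he, ← prevLoc_congr S M h hf, ← h f hf]
    exact h2 d e f hef
  · have : (fun p => S.lastLoc M ρ' p) = fun p => S.lastLoc M ρ p := by
      funext p
      unfold lastLoc
      split
      · rfl
      · exact (h _ ⟨by simp only; omega, le_rfl⟩).symm
    rwa [this]

theorem exists_rho (ρ : A.Event → S.Locs) : ∃ μ : ℕ → Set A.Event,
    (∀ i, μ i ⊆ M.events) ∧ (∀ i, Fintype.card S.Locs ≤ i → μ i = ∅) ∧
    ∀ e, M.isEvent e → ρ e = S.rho μ e := by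
  refine ⟨fun i => {e | M.isEvent e ∧ S.idx (ρ e) = i}, fun i e h => h.1, ?_, ?_⟩
  · intro i hi
    ext e
    have := S.idx_lt (ρ e)
    simp only [Set.mem_setOf_eq, Set.mem_empty_iff_false, iff_false]
    rintro ⟨-, h⟩
    omega
  · intro e he
    have : {l | e ∈ {e | M.isEvent e ∧ S.idx (ρ e) = S.idx l}} = {ρ e} := by
      ext l
      simp only [Set.mem_setOf_eq, Set.mem_singleton_iff]
      constructor
      · rintro ⟨-, h⟩; exact (S.idx_inj h).symm
      · rintro rfl; exact ⟨he, rfl⟩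
    rw [rho, this, dec_single]
end sat

end CPDS

/-- For every architecture `A`, finite alphabet `Alph`, and
every CPDS `S` over `(A, Alph)`, there exists an EMSO sentence `Φ_S` such that
`L(Φ_S) = L(S)`. -/
theorem cpds_to_emso (A : Architecture) (Alph : Type) [Fintype Alph]
    (S : CPDS A Alph) :
    ∃ φ : GMSO (Alph ⊕ A.Procs) (Option A.DS),
      GMSO.Closed φ ∧ GMSO.IsEMSO φ ∧ msoLang A Alph φ = S.lang := by
  letI := S.locsFintype
  obtain ⟨g1, g2, g3⟩ := S.good_fBody
  refine ⟨GMSO.exBlock (Fintype.card S.Locs) S.fBody, ⟨?_, ?_⟩, GMSO.exBlock_emso _ g1, ?_⟩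
  · rw [GMSO.exBlock_freeFO]; exact Set.subset_empty_iff.1 g2
  · rw [GMSO.exBlock_freeSO]; exact Set.diff_eq_empty.2 g3
  · ext ⟨M, hM⟩
    change GMSO.Sat _ _ _ _ _ _ ↔ S.AcceptsPre M
    rw [GMSO.sat_exBlock]
    constructor
    · rintro ⟨μ, -, -, h⟩
      exact ⟨_, (S.sat_fBody M hM).1 h⟩
    · rintro ⟨ρ, h⟩
      obtain ⟨μ, h1, h2, h3⟩ := S.exists_rho M ρ
      exact ⟨μ, fun i _ => h1 i, h2, (S.sat_fBody M hM).2 (S.run_congr M hM h3 h)⟩
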